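/- For every integer n ≥ 1, (−1)ⁿ ∫₀^∞ x^{2n−1}·log(1 + x²)/(e^{2πx} − 1) dx = H_{2n}/(2n) + ∑_{k=0}^{2n−1} (−1)^k · C(2n−1, k) · ζ'(−k), where H_p = ∑_{j=1}^p 1/j is the p-th harmonic number, C(n,k) is the binomial coefficient, and ζ' the derivative of the Riemann zeta function. -/

import Mathlib

open Real MeasureTheory Filter

/-- Hurwitz zeta function ζ(s, a) for real a > 0, via analytic continuation. -/
noncomputable def hurwitzZetaReal (s : ℂ) (a : ℝ) : ℂ :=
  HurwitzZeta.hurwitzZeta (a : UnitAddCircle) s -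
    ∑ k ∈ Finset.range (⌈a⌉₊ - 1), ((a - (⌈a⌉₊ - 1) + k : ℝ) : ℂ) ^ (-s)

/-- ζ'(-1, a): derivative of the Hurwitz zeta function w.r.t. s at s = -1. -/
noncomputable def hurwitzZetaDerivNegOne (a : ℝ) : ℂ :=
  deriv (fun s => hurwitzZetaReal s a) (-1)

/-- Logarithm of the Glaisher–Kinkelin constant: log A = 1/12 - ζ'(-1). -/
noncomputable def logA : ℂ := 1 / 12 - deriv riemannZeta (-1)

/-- log G(z+1) for z > 0, via log G(z+1) = z log Γ(z) + ζ'(-1) - ζ'(-1, z). -/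
noncomputable def logBarnesG1p (z : ℝ) : ℂ :=
  z * Real.log (Real.Gamma z) + deriv riemannZeta (-1) - hurwitzZetaDerivNegOne z

/-- log G(x) for x > 0, via the recurrence G(z+1) = Γ(z) G(z) on (0, 1]. -/
noncomputable def logBarnesG (x : ℝ) : ℂ :=
  if x ≤ 1 then logBarnesG1p x - Real.log (Real.Gamma x) else logBarnesG1p (x - 1)

/-- The Barnes G-function (for positive real argument). -/
noncomputable def barnesG (x : ℝ) : ℂ := Complex.exp (logBarnesG x)

/-- The digamma function ψ = (log Γ)'. -/
noncomputable def digamma (x : ℝ) : ℝ := deriv (fun t => Real.log (Real.Gamma t)) x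

/-- The trigamma function ψ⁽¹⁾ = (log Γ)''. -/
noncomputable def trigamma (x : ℝ) : ℝ :=
  deriv (deriv (fun t => Real.log (Real.Gamma t))) x

/-- The Clausen function Cl₂(x) = ∑_{k ≥ 1} sin(k x) / k². -/
noncomputable def clausen2 (x : ℝ) : ℝ := ∑' k : ℕ, Real.sin ((k + 1) * x) / (k + 1) ^ 2

/-- Catalan's constant. -/
noncomputable def catalanConst : ℝ := ∑' k : ℕ, (-1 : ℝ) ^ k / (2 * (k : ℝ) + 1) ^ 2


lemma aux_int (σ b : ℝ) (hσ : 0 < σ) (hb : 0 < b) :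
    IntegrableOn (fun t : ℝ => t ^ (σ - 1) * Real.exp (-(b * t))) (Set.Ioi 0) := by
  have := integrableOn_rpow_mul_exp_neg_mul_rpow (p := 1) (s := σ - 1) (b := b) (by linarith) one_pos hb
  simpa [Real.rpow_one] using this

lemma aux_meas (s r : ℂ) : AEStronglyMeasurable (fun t : ℝ => (t : ℂ) ^ s * Complex.exp (-(r * t)))
    (volume.restrict (Set.Ioi 0)) := by
  refine ContinuousOn.aestronglyMeasurable ?_ measurableSet_Ioi
  refine ContinuousOn.mul ?_ (by fun_prop)
  intro t ht
  exact (Complex.continuousAt_ofReal_cpow_const t s (Or.inr (ne_of_gt ht))).continuousWithinAt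

lemma aux_norm (s r : ℂ) (t : ℝ) (ht : 0 < t) : ‖(t : ℂ) ^ s * Complex.exp (-(r * t))‖ =
    t ^ s.re * Real.exp (-(r.re * t)) := by
  rw [norm_mul, Complex.norm_cpow_eq_rpow_re_of_pos ht, Complex.norm_exp]
  simp

lemma aux_int_c (s r : ℂ) (hs : 0 < s.re) (hr : 0 < r.re) :
    IntegrableOn (fun t : ℝ => (t : ℂ) ^ (s - 1) * Complex.exp (-(r * t))) (Set.Ioi 0) := by
  refine Integrable.mono' (aux_int s.re r.re hs hr) (aux_meas _ _) ?_
  filter_upwards [ae_restrict_mem measurableSet_Ioi] with t ht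
  rw [aux_norm _ _ _ ht]; simp

lemma aux_gamma_deriv (s r : ℂ) (hs : 0 < s.re) (hr : 0 < r.re) :
    DifferentiableAt ℂ (fun r : ℂ => ∫ t in Set.Ioi (0:ℝ), (t : ℂ) ^ (s - 1) * Complex.exp (-(r * t))) r := by
  have hb : Metric.ball r (r.re / 2) ∈ nhds r := Metric.ball_mem_nhds _ (by linarith)
  refine (hasDerivAt_integral_of_dominated_loc_of_deriv_le
    (F := fun (r : ℂ) (t : ℝ) => (t : ℂ) ^ (s - 1) * Complex.exp (-(r * t)))
    (F' := fun r t => -((t : ℂ) ^ s * Complex.exp (-(r * t))))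
    (bound := fun t => t ^ ((s.re + 1) - 1) * Real.exp (-((r.re / 2) * t)))
    hb (Eventually.of_forall fun r => aux_meas _ _) (aux_int_c s r hs hr) (aux_meas _ _).neg ?_
    (aux_int _ _ (by linarith) (by linarith)) ?_).2.differentiableAt
  · filter_upwards [ae_restrict_mem measurableSet_Ioi] with t ht z hz
    rw [norm_neg, aux_norm _ _ _ ht]
    have h1 : |z.re - r.re| < r.re / 2 := by
      refine lt_of_le_of_lt ?_ (mem_ball_iff_norm.1 hz)
      simpa using Complex.abs_re_le_norm (z - r)
    have ht' : (0:ℝ) < t := ht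
    have h2 := (abs_lt.1 h1).1
    simp only [add_sub_cancel_right]
    gcongr
    linarith
  · filter_upwards [ae_restrict_mem measurableSet_Ioi] with t ht z hz
    have ht' : (t : ℂ) ≠ 0 := by exact_mod_cast (ne_of_gt ht)
    have h : HasDerivAt (fun z : ℂ => -(z * t)) (-(t:ℂ)) z :=
      ((hasDerivAt_id z).mul_const (t:ℂ)).neg.congr_deriv (by simp)
    refine (h.cexp.const_mul ((t : ℂ) ^ (s - 1))).congr_deriv ?_
    rw [Complex.cpow_sub _ _ ht', Complex.cpow_one]
    field_simp

lemma aux_gamma (s r : ℂ) (hs : 0 < s.re) (hr : 0 < r.re) :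
    ∫ t in Set.Ioi (0:ℝ), (t : ℂ) ^ (s - 1) * Complex.exp (-(r * t)) = r ^ (-s) * Complex.Gamma s := by
  set U : Set ℂ := {z | 0 < z.re} with hU
  have hUo : IsOpen U := isOpen_lt continuous_const Complex.continuous_re
  have h1 : AnalyticOnNhd ℂ (fun r : ℂ => ∫ t in Set.Ioi (0:ℝ), (t : ℂ) ^ (s - 1) * Complex.exp (-(r * t))) U :=
    DifferentiableOn.analyticOnNhd
      (fun r hr => (aux_gamma_deriv s r hs hr).differentiableWithinAt) hUo
  have h2 : AnalyticOnNhd ℂ (fun r : ℂ => r ^ (-s) * Complex.Gamma s) U := by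
    refine DifferentiableOn.analyticOnNhd (fun r hr => ?_) hUo
    refine DifferentiableAt.differentiableWithinAt ?_
    exact (DifferentiableAt.cpow_const differentiableAt_id (Or.inl hr)).mul_const _
  have hpc : IsPreconnected U := (convex_halfSpace_re_gt 0).isPreconnected
  refine h1.eqOn_of_preconnected_of_frequently_eq h2 hpc (z₀ := 1) (by simp [hU]) ?_ hr
  have hreal : ∀ x : ℝ, 0 < x → ∫ t in Set.Ioi (0:ℝ), (t : ℂ) ^ (s - 1) * Complex.exp (-((x:ℂ) * t)) = (x:ℂ) ^ (-s) * Complex.Gamma s := by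
    intro x hx
    rw [Complex.integral_cpow_mul_exp_neg_mul_Ioi hs hx, one_div, Complex.inv_cpow, Complex.cpow_neg]
    rw [Complex.arg_ofReal_of_nonneg hx.le]; exact pi_pos.ne
  have ht : Tendsto (fun x : ℝ => (x : ℂ)) (nhdsWithin 1 {1}ᶜ) (nhdsWithin 1 {1}ᶜ) := by
    refine tendsto_nhdsWithin_iff.2 ⟨?_, ?_⟩
    · exact (Complex.continuous_ofReal.tendsto' 1 1 (by simp)).mono_left nhdsWithin_le_nhds
    · filter_upwards [self_mem_nhdsWithin] with x hx
      simpa using hx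
  refine ht.frequently (Eventually.frequently ?_)
  have : ∀ᶠ x : ℝ in nhds 1, 0 < x := lt_mem_nhds one_pos
  filter_upwards [this.filter_mono nhdsWithin_le_nhds] with x hx
  exact hreal x hx

/-- weight -/
noncomputable def auxW (m : ℕ) (x : ℝ) : ℝ := x ^ m / (Real.exp (2 * π * x) - 1)

lemma auxW_meas (m : ℕ) : Measurable (auxW m) := by
  unfold auxW; fun_prop

lemma auxW_den (x : ℝ) (hx : 0 < x) : 0 < Real.exp (2 * π * x) - 1 := by
  have := Real.add_one_lt_exp (x := 2 * π * x) (by positivity)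
  have : 0 < 2 * π * x := by positivity
  linarith

lemma auxW_nonneg (m : ℕ) (x : ℝ) (hx : 0 < x) : 0 ≤ auxW m x :=
  div_nonneg (by positivity) (auxW_den x hx).le

lemma auxW_le (m : ℕ) (hm : 1 ≤ m) (x : ℝ) (hx : 0 < x) :
    auxW m x ≤ x ^ (m - 1) * Real.exp (-(π * x)) := by
  have h0 := auxW_den x hx
  rw [auxW, div_le_iff₀ h0]
  obtain ⟨k, rfl⟩ : ∃ k, m = k + 1 := ⟨m - 1, by omega⟩
  simp only [add_tsub_cancel_right, pow_succ, mul_assoc]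
  gcongr
  have h1 : Real.exp (2 * (π * x)) = Real.exp (π * x) * Real.exp (π * x) := by
    rw [← Real.exp_add]; ring_nf
  have h2 : Real.exp (-(π * x)) * Real.exp (π * x) = 1 := by
    rw [← Real.exp_add]; simp
  have h3 := Real.self_le_sinh_iff.2 (show 0 ≤ π * x by positivity)
  rw [Real.sinh_eq] at h3
  have : Real.exp (-(π * x)) * (Real.exp (2 * (π * x)) - 1) = Real.exp (π * x) - Real.exp (-(π * x)) := by
    rw [h1]; linear_combination Real.exp (π * x) * h2
  rw [this]
  have := Real.pi_gt_three
  nlinarith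

lemma auxW_int (m N : ℕ) (hm : 1 ≤ m) :
    IntegrableOn (fun x => auxW m x * (1 + x) ^ N) (Set.Ioi 0) := by
  have h : IntegrableOn (fun x : ℝ => (x ^ (m-1) * (1+x)^N) * Real.exp (-(π * x))) (Set.Ioi 0) := by
    refine integrable_of_isBigO_exp_neg (b := 1) one_pos (by fun_prop) ?_
    have h2 : (fun x : ℝ => x ^ (m-1) * (1+x)^N) =O[atTop] fun x => Real.exp (2 * x) := by
      refine Asymptotics.IsBigO.of_bound ((m-1).factorial * N.factorial * Real.exp 1) ?_
      filter_upwards [eventually_ge_atTop 0] with x hx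
      have e1 := Real.pow_div_factorial_le_exp x hx (m-1)
      have e2 := Real.pow_div_factorial_le_exp (1+x) (by linarith) N
      rw [div_le_iff₀ (by positivity)] at e1 e2
      rw [Real.norm_of_nonneg (by positivity), Real.norm_of_nonneg (by positivity)]
      calc x ^ (m-1) * (1+x)^N ≤ _ := mul_le_mul e1 e2 (by positivity) (by positivity)
        _ = _ := by rw [Real.exp_add, two_mul, Real.exp_add]; ring
    refine (h2.mul (Asymptotics.isBigO_refl (fun x => Real.exp (-(π * x))) _)).trans ?_
    refine Asymptotics.IsBigO.of_bound 1 ?_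
    filter_upwards [eventually_ge_atTop 0] with x hx
    rw [← Real.exp_add, one_mul]
    simp only [Real.norm_eq_abs, Real.abs_exp]
    rw [Real.exp_le_exp]
    have := Real.pi_gt_three
    nlinarith
  refine Integrable.mono' h ((auxW_meas m).mul (by fun_prop)).aestronglyMeasurable ?_
  filter_upwards [ae_restrict_mem measurableSet_Ioi] with x hx
  have hx' : (0:ℝ) < x := hx
  rw [Real.norm_of_nonneg (mul_nonneg (auxW_nonneg m x hx) (by positivity))]
  calc _ ≤ (x ^ (m - 1) * Real.exp (-(π * x))) * (1 + x) ^ N := by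
        gcongr; exact auxW_le m hm x hx
    _ = _ := by ring

lemma aux_hasSum_congr {f g : ℕ → ℂ} {a : ℂ} (hg : HasSum g a) (h : ∀ j, f j = g j) : HasSum f a := by
  rw [show f = g from funext h]; exact hg

noncomputable def auxE (m : ℕ) (t : ℝ) : ℂ :=
  ∫ x in Set.Ioi (0:ℝ), (auxW m x : ℂ) * Complex.exp (-(Complex.I * t * x))

lemma auxE_hasSum (m : ℕ) (hm : 1 ≤ m) (t : ℝ) :
    HasSum (fun j : ℕ => (m.factorial : ℂ) / (2 * π * (j + 1) + Complex.I * t) ^ (m + 1)) (auxE m t) := by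
  set r : ℕ → ℂ := fun j => 2 * π * (j + 1) + Complex.I * t with hr
  have hrre : ∀ j, (r j).re = 2 * π * (j + 1) := by intro j; simp [hr]
  have hrpos : ∀ j, 0 < (r j).re := by intro j; rw [hrre]; positivity
  have hs : 0 < ((m : ℂ) + 1).re := by simp; positivity
  have key := hasSum_integral_of_summable_integral_norm (μ := volume.restrict (Set.Ioi (0:ℝ)))
    (F := fun (j : ℕ) (x : ℝ) => (x : ℂ) ^ ((m : ℂ) + 1 - 1) * Complex.exp (-(r j * x)))
    (fun j => aux_int_c _ _ hs (hrpos j)) ?_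
  · suffices hv : auxE m t = ∫ (a : ℝ) in Set.Ioi 0, ∑' (i : ℕ), (a : ℂ) ^ ((m : ℂ) + 1 - 1) * Complex.exp (-(r i * a)) by
      rw [hv]
      refine aux_hasSum_congr key fun j => ?_
      rw [aux_gamma _ _ hs (hrpos j), Complex.Gamma_nat_eq_factorial, Complex.cpow_neg]
      rw [show (m : ℂ) + 1 = ((m + 1 : ℕ) : ℂ) by push_cast; ring, Complex.cpow_natCast]
      ring
    · unfold auxE
      refine setIntegral_congr_fun measurableSet_Ioi fun x hx => ?_
      have hx' : (0:ℝ) < x := hx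
      set q : ℝ := Real.exp (-(2 * π * x)) with hq
      have hq0 : 0 ≤ q := (Real.exp_pos _).le
      have hq1 : q < 1 := by
        rw [hq, Real.exp_lt_one_iff]; have : 0 < 2 * π * x := by positivity
        linarith
      have h1 : ∀ j : ℕ, (x : ℂ) ^ ((m : ℂ) + 1 - 1) * Complex.exp (-(r j * x)) =
          ((x ^ m * q : ℝ) : ℂ) * Complex.exp (-(Complex.I * t * x)) * ((q ^ j : ℝ) : ℂ) := by
        intro j
        rw [add_sub_cancel_right, Complex.cpow_natCast, hq, ← Real.exp_nat_mul]
        push_cast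
        rw [mul_assoc, mul_assoc, mul_assoc]
        congr 1
        rw [← Complex.exp_add, ← Complex.exp_add]
        congr 1
        simp only [hr]; ring
      simp only [h1]
      rw [tsum_mul_left, ← Complex.ofReal_tsum, tsum_geometric_of_lt_one hq0 hq1]
      have h2 : auxW m x = x ^ m * q * (1 - q)⁻¹ := by
        rw [auxW]
        have h3 : Real.exp (2 * π * x) = q⁻¹ := by rw [hq, Real.exp_neg, inv_inv]
        have h4 : 0 < q := Real.exp_pos _
        have h5 : 1 - q ≠ 0 := by linarith
        rw [h3]
        have h6 : q⁻¹ - 1 = (1 - q) / q := by field_simp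
        rw [h6]; field_simp
      rw [h2]; push_cast; ring
  · have h1 : ∀ j : ℕ, ∫ x in Set.Ioi (0:ℝ), ‖(x : ℂ) ^ ((m : ℂ) + 1 - 1) * Complex.exp (-(r j * x))‖ =
        Real.Gamma (m + 1) / (2 * π) ^ (m+1) * (1 / ((j + 1 : ℕ) : ℝ) ^ (m + 1)) := by
      intro j
      have := Real.integral_rpow_mul_exp_neg_mul_Ioi (a := (m:ℝ) + 1) (by positivity) (hrpos j)
      rw [show ((m:ℝ) + 1) = ((m + 1 : ℕ) : ℝ) by push_cast; ring, Real.rpow_natCast, hrre] at this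
      have h2 : ∫ x in Set.Ioi (0:ℝ), ‖(x : ℂ) ^ ((m : ℂ) + 1 - 1) * Complex.exp (-(r j * x))‖ = 
          ∫ x in Set.Ioi (0:ℝ), x ^ (((m + 1 : ℕ) : ℝ) - 1) * Real.exp (-(2 * π * (j + 1) * x)) := by
        refine setIntegral_congr_fun measurableSet_Ioi fun x hx => ?_
        refine (aux_norm _ _ _ hx).trans ?_
        rw [hrre]; simp
      rw [h2, this]
      push_cast
      rw [div_pow, mul_pow, one_pow]
      field_simp
    simp only [h1]
    refine Summable.mul_left _ ?_
    exact (summable_nat_add_iff 1).2 (Real.summable_one_div_nat_pow.2 (by omega : 1 < m + 1))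

lemma auxK (m n : ℕ) (hm : m + 1 = 2 * n) (hn : 1 ≤ n) (t : ℝ) (ht : 0 < t) :
    HasSum (fun w : ℕ => (w : ℂ) ^ m * (Real.exp (-(w * t)) : ℂ))
      ((m.factorial : ℂ) / t ^ (m + 1) + (-1) ^ n * (auxE m t + auxE m (-t))) := by
  have hm1 : 1 ≤ m := by omega
  have hexp : ∀ w : ℕ, (Real.exp (-(w * t)) : ℂ) = Complex.exp (-t) ^ w := by
    intro w; rw [← Complex.exp_nat_mul]; push_cast; congr 1; ring
  have hsum : Summable (fun w : ℕ => (w : ℂ) ^ m * (Real.exp (-(w * t)) : ℂ)) := by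
    simp only [hexp]
    refine summable_pow_mul_geometric_of_norm_lt_one m ?_
    rw [Complex.norm_exp]; simpa using ht
  have hpi : (π : ℂ) ≠ 0 := by exact_mod_cast pi_ne_zero
  have htc : (t : ℂ) ≠ 0 := by exact_mod_cast ht.ne'
  have hI : Complex.I ^ (m + 1) = (-1) ^ n := by rw [hm, pow_mul, Complex.I_sq]
  set z : UpperHalfPlane := ⟨Complex.I * t / (2 * π), by
    have : Complex.I * t / (2 * π) = ((t / (2 * π) : ℝ) : ℂ) * Complex.I := by push_cast; ring
    rw [this, Complex.im_ofReal_mul, Complex.I_im]; positivity⟩ with hz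
  have hzc : (z : ℂ) = Complex.I * t / (2 * π) := rfl
  have hq := EisensteinSeries.qExpansion_identity hm1 z
  have hfac : (m.factorial : ℂ) ≠ 0 := by exact_mod_cast m.factorial_ne_zero
  have hE1 := (auxE_hasSum m hm1 t).mul_left ((2 * π : ℂ) ^ (m + 1) / m.factorial)
  have hE2 := (auxE_hasSum m hm1 (-t)).mul_left ((2 * π : ℂ) ^ (m + 1) / m.factorial)
  have hZ : HasSum (fun k : ℤ => 1 / ((z : ℂ) + k) ^ (m + 1))
     ((2 * π : ℂ) ^ (m + 1) / m.factorial * auxE m t + 1 / ((z : ℂ) + (0 : ℤ)) ^ (m + 1) +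
       (2 * π : ℂ) ^ (m + 1) / m.factorial * auxE m (-t)) := by
    refine HasSum.of_add_one_of_neg_add_one ?_ ?_
    · refine aux_hasSum_congr hE1 fun j => ?_
      have : (z : ℂ) + ((j + 1 : ℤ) : ℂ) = (2 * π * (j + 1) + Complex.I * t) / (2 * π) := by
        rw [hzc]; push_cast; field_simp; ring
      rw [this, div_pow]
      field_simp
    · refine aux_hasSum_congr hE2 fun j => ?_
      have : (z : ℂ) + ((-(j + 1) : ℤ) : ℂ) = -((2 * π * (j + 1) + Complex.I * ((-t : ℝ) : ℂ)) / (2 * π)) := by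
        rw [hzc]; push_cast; field_simp; ring
      rw [this, Even.neg_pow ⟨n, by omega⟩, div_pow]
      field_simp
  rw [hZ.tsum_eq] at hq
  have hexp2 : Complex.exp (2 * π * Complex.I * z) = Complex.exp (-t) := by
    rw [hzc]; congr 1; field_simp; rw [Complex.I_sq]
  rw [hexp2] at hq
  have e1 : (-2 * π * Complex.I) ^ (m + 1) = (2 * π : ℂ) ^ (m + 1) * (-1) ^ n := by
    rw [← hI, ← mul_pow, show (-2 * π * Complex.I) = -(2 * π * Complex.I) by ring, Even.neg_pow ⟨n, by omega⟩]
  have e2 : 1 / ((z : ℂ) + (0 : ℤ)) ^ (m + 1) = (2 * π : ℂ) ^ (m + 1) * (-1) ^ n / t ^ (m + 1) := by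
    rw [hzc, Int.cast_zero, add_zero, div_pow, mul_pow, hI]
    have : ((-1 : ℂ) ^ n) * (-1) ^ n = 1 := by rw [← mul_pow]; simp
    have h3 : ((-1 : ℂ) ^ n) ≠ 0 := by simp
    field_simp
    linear_combination -this
  rw [e1, e2] at hq
  have hsgn : ((-1 : ℂ) ^ n) * (-1) ^ n = 1 := by rw [← mul_pow]; simp
  have h2pi : (2 * π : ℂ) ^ (m + 1) ≠ 0 := pow_ne_zero _ (mul_ne_zero two_ne_zero hpi)
  suffices hS : (m.factorial : ℂ) / t ^ (m + 1) + (-1) ^ n * (auxE m t + auxE m (-t)) =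
      ∑' w : ℕ, (w : ℂ) ^ m * (Real.exp (-(w * t)) : ℂ) by
    rw [hS]; exact hsum.hasSum
  simp only [hexp]
  generalize (∑' w : ℕ, (w : ℂ) ^ m * Complex.exp (-t) ^ w) = S at hq ⊢
  generalize auxE m t = a at hq ⊢
  generalize auxE m (-t) = b at hq ⊢
  have hq' : a + b + m.factorial * (-1) ^ n / t ^ (m+1) = (-1) ^ n * S := by
    generalize (2 * π : ℂ) ^ (m + 1) = P at hq h2pi
    linear_combination (norm := (field_simp; ring)) (m.factorial / P) * hq
  linear_combination (-1) ^ n * hq' + (S - m.factorial / t ^ (m+1)) * hsgn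

noncomputable def auxJ (m : ℕ) (c : ℝ) (s : ℂ) : ℂ :=
  ∫ x in Set.Ioi (0:ℝ), (auxW m x : ℂ) * (1 + Complex.I * c * x) ^ (-s)

lemma auxW_intC (m : ℕ) (hm : 1 ≤ m) :
    IntegrableOn (fun x => (auxW m x : ℂ)) (Set.Ioi 0) := by
  have := auxW_int m 0 hm
  simp only [pow_zero, mul_one] at this
  exact this.ofReal

lemma aux_swap (m : ℕ) (hm : 1 ≤ m) (c : ℝ) (s : ℂ) (hs : 0 < s.re) :
    IntegrableOn (fun t : ℝ => (t : ℂ) ^ (s - 1) * Complex.exp (-(1 * t)) * auxE m (c * t)) (Set.Ioi 0) ∧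
    ∫ t in Set.Ioi (0:ℝ), (t : ℂ) ^ (s - 1) * Complex.exp (-(1 * t)) * auxE m (c * t) =
      Complex.Gamma s * auxJ m c s := by
  have hprod : Integrable (fun p : ℝ × ℝ => ((p.1 : ℂ) ^ (s - 1) * Complex.exp (-(1 * p.1))) * (auxW m p.2 : ℂ))
      ((volume.restrict (Set.Ioi (0:ℝ))).prod (volume.restrict (Set.Ioi (0:ℝ)))) :=
    Integrable.mul_prod (aux_int_c s 1 hs (by simp)) (auxW_intC m hm)
  have hprod2 : Integrable (fun p : ℝ × ℝ => (((p.1 : ℂ) ^ (s - 1) * Complex.exp (-(1 * p.1))) * (auxW m p.2 : ℂ)) *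
      Complex.exp (-(Complex.I * ((c * p.1 : ℝ) : ℂ) * p.2)))
      ((volume.restrict (Set.Ioi (0:ℝ))).prod (volume.restrict (Set.Ioi (0:ℝ)))) := by
    refine hprod.mul_bdd (c := 1) ?_ ?_
    · exact Continuous.aestronglyMeasurable (by fun_prop)
    · refine Eventually.of_forall fun p => ?_
      rw [Complex.norm_exp]; simp
  have hin : ∀ t : ℝ, ∫ x in Set.Ioi (0:ℝ), (((t : ℂ) ^ (s - 1) * Complex.exp (-(1 * t))) * (auxW m x : ℂ)) *
      Complex.exp (-(Complex.I * ((c * t : ℝ) : ℂ) * x)) =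
      (t : ℂ) ^ (s - 1) * Complex.exp (-(1 * t)) * auxE m (c * t) := by
    intro t
    rw [auxE, ← integral_const_mul]
    refine integral_congr_ae (Eventually.of_forall fun x => ?_)
    simp only [mul_assoc]
  have hA := hprod2.integral_prod_left
  simp only [hin] at hA
  refine ⟨hA, ?_⟩
  have hB := integral_integral_swap (f := fun (t x : ℝ) => (((t : ℂ) ^ (s - 1) * Complex.exp (-(1 * t))) * (auxW m x : ℂ)) *
      Complex.exp (-(Complex.I * ((c * t : ℝ) : ℂ) * x))) hprod2
  simp only [hin] at hB
  rw [hB, auxJ, ← integral_const_mul]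
  refine integral_congr_ae (Eventually.of_forall fun x => ?_)
  have hg := aux_gamma s (1 + Complex.I * c * x) hs (by simp)
  simp only []
  calc _ = ∫ t in Set.Ioi (0:ℝ), (auxW m x : ℂ) * ((t : ℂ) ^ (s - 1) * Complex.exp (-((1 + Complex.I * c * x) * t))) := by
        refine integral_congr_ae (Eventually.of_forall fun t => ?_)
        simp only []
        have : Complex.exp (-((1 + Complex.I * c * x) * t)) = Complex.exp (-(1 * t)) * Complex.exp (-(Complex.I * ((c * t : ℝ) : ℂ) * x)) := by
          rw [← Complex.exp_add]; congr 1; push_cast; ring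
        rw [this]; ring
    _ = _ := by rw [integral_const_mul, hg]; ring

lemma aux_mellin (m n : ℕ) (hm : m + 1 = 2 * n) (s : ℂ) (hs : (m : ℝ) + 1 < s.re) :
    HasSum (fun w : ℕ => Complex.Gamma s * (w : ℂ) ^ m / (((w : ℝ) + 1 : ℝ) : ℂ) ^ s)
      (m.factorial * Complex.Gamma (s - (m + 1)) +
        (-1) ^ n * (Complex.Gamma s * (auxJ m 1 s + auxJ m (-1) s))) := by
  have hm1 : 1 ≤ m := by omega
  have hs0 : 0 < s.re := by have : (0:ℝ) ≤ m := by positivity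
                            linarith
  set F : ℝ → ℂ := fun t => Complex.exp (-(1 * t)) * ((m.factorial : ℂ) / t ^ (m + 1) + (-1) ^ n * (auxE m t + auxE m (-t))) with hF
  have h1 : HasSum (fun w : ℕ => Complex.Gamma s * (w : ℂ) ^ m / (((w : ℝ) + 1 : ℝ) : ℂ) ^ s) (mellin F s) := by
    refine hasSum_mellin (a := fun w : ℕ => (w : ℂ) ^ m) (p := fun w : ℕ => (w : ℝ) + 1) (fun i => Or.inr (by positivity)) hs0 ?_ ?_
    · intro t ht
      have := (auxK m n hm (by omega) t ht).mul_left (Complex.exp (-(1 * t)))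
      refine aux_hasSum_congr this fun j => ?_
      rw [mul_left_comm]
      congr 1
      push_cast
      rw [← Complex.exp_add]; congr 1; ring
    · have hz : Summable (fun w : ℕ => 1 / ((w + 1 : ℕ) : ℝ) ^ (s.re - m)) :=
        (summable_nat_add_iff 1).2 (Real.summable_one_div_nat_rpow.2 (by linarith))
      refine Summable.of_nonneg_of_le (fun w => by positivity) (fun w => ?_) hz
      have hw : (0:ℝ) < (w:ℝ) + 1 := by positivity
      push_cast
      rw [Real.rpow_sub hw, Real.rpow_natCast, one_div_div]
      simp only [norm_pow, Complex.norm_natCast]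
      gcongr
      linarith
  suffices h2 : mellin F s = (m.factorial * Complex.Gamma (s - (m + 1)) +
        (-1) ^ n * (Complex.Gamma s * (auxJ m 1 s + auxJ m (-1) s))) by
    rw [← h2]; exact h1
  obtain ⟨i1, e1⟩ := aux_swap m hm1 1 s hs0
  obtain ⟨i2, e2⟩ := aux_swap m hm1 (-1) s hs0
  have hs1 : 0 < (s - (m + 1)).re := by simp; linarith
  have i3 := aux_int_c (s - (m + 1)) 1 hs1 (by simp)
  have e3 := aux_gamma (s - (m + 1)) 1 hs1 (by simp)
  rw [Complex.one_cpow, one_mul] at e3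
  rw [mellin]
  calc _ = ∫ t in Set.Ioi (0:ℝ), ((m.factorial : ℂ) * ((t : ℂ) ^ (s - (m + 1) - 1) * Complex.exp (-(1 * t))) +
      (-1) ^ n * ((t : ℂ) ^ (s - 1) * Complex.exp (-(1 * t)) * auxE m (1 * t) + (t : ℂ) ^ (s - 1) * Complex.exp (-(1 * t)) * auxE m (-1 * t))) := by
        refine setIntegral_congr_fun measurableSet_Ioi fun t ht => ?_
        have ht' : (t : ℂ) ≠ 0 := by exact_mod_cast (ne_of_gt ht)
        have : (t : ℂ) ^ (s - (m + 1) - 1) = (t : ℂ) ^ (s - 1) / t ^ (m + 1) := by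
          rw [show s - (m + 1) - 1 = (s - 1) - ((m + 1 : ℕ) : ℂ) by push_cast; ring, Complex.cpow_sub _ _ ht', Complex.cpow_natCast]
        simp only [hF, this, smul_eq_mul, one_mul, neg_mul]
        ring
    _ = _ := by
        have i12 : IntegrableOn (fun t : ℝ => (t : ℂ) ^ (s - 1) * Complex.exp (-(1 * t)) * auxE m (1 * t) + (t : ℂ) ^ (s - 1) * Complex.exp (-(1 * t)) * auxE m (-1 * t)) (Set.Ioi 0) := Integrable.add i1 i2
        rw [integral_add (i3.const_mul _) (i12.const_mul _), integral_const_mul, integral_const_mul,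
          integral_add i1 i2, e1, e2, e3]
        ring

lemma aux_zeta (m n : ℕ) (hm : m + 1 = 2 * n) (s : ℂ) (hs : (m : ℝ) + 1 < s.re) :
    HasSum (fun w : ℕ => -((w : ℂ) ^ m / (((w : ℝ) + 1 : ℝ) : ℂ) ^ s))
      (∑ k ∈ Finset.range (m + 1), (-1 : ℂ) ^ k * (Nat.choose m k : ℂ) * riemannZeta (s - k)) := by
  have h : ∀ k ∈ Finset.range (m + 1), HasSum (fun w : ℕ => (-1 : ℂ) ^ k * (Nat.choose m k : ℂ) * (1 / ((w : ℂ) + 1) ^ (s - k)))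
      ((-1 : ℂ) ^ k * (Nat.choose m k : ℂ) * riemannZeta (s - k)) := by
    intro k hk
    refine HasSum.mul_left _ ?_
    have hk' : (k : ℝ) ≤ m := by exact_mod_cast Nat.lt_succ_iff.1 (Finset.mem_range.1 hk)
    have h1 : 1 < (s - k).re := by simp; linarith
    rw [zeta_eq_tsum_one_div_nat_add_one_cpow h1]
    refine Summable.hasSum ?_
    have := (summable_nat_add_iff 1).2 (Complex.summable_one_div_nat_cpow.2 h1)
    simpa using this
  refine aux_hasSum_congr (hasSum_sum h) fun w => ?_
  have hw : (w : ℂ) + 1 ≠ 0 := by exact_mod_cast Nat.succ_ne_zero w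
  have h2 : ∀ k ∈ Finset.range (m + 1), (-1 : ℂ) ^ k * (Nat.choose m k : ℂ) * (1 / ((w : ℂ) + 1) ^ (s - k)) =
      ((-((w : ℂ) + 1)) ^ k * 1 ^ (m - k) * (Nat.choose m k : ℂ)) * (1 / ((w : ℂ) + 1) ^ s) := by
    intro k _
    rw [Complex.cpow_sub _ _ hw, Complex.cpow_natCast, one_div_div, neg_pow ((w : ℂ) + 1)]
    ring
  rw [Finset.sum_congr rfl h2, ← Finset.sum_mul, ← add_pow]
  have : -((w : ℂ) + 1) + 1 = -w := by ring
  rw [this, Odd.neg_pow ⟨n - 1, by omega⟩]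
  push_cast
  ring

lemma aux_Gamma_prod (N : ℕ) (s : ℂ) (hs : (N : ℝ) < s.re) :
    Complex.Gamma s = Complex.Gamma (s - N) * ∏ j ∈ Finset.range N, (s - (j + 1)) := by
  induction N with
  | zero => simp
  | succ N ih =>
    push_cast at hs
    rw [ih (by linarith), Finset.prod_range_succ]
    have h0 : s - (N + 1) ≠ 0 := by
      intro h
      have := congrArg Complex.re h
      simp at this
      linarith
    have := Complex.Gamma_add_one (s - (N + 1)) h0
    rw [show s - N = s - (N + 1) + 1 by ring, this]
    push_cast
    ring

lemma aux_D (m n : ℕ) (hm : m + 1 = 2 * n) (s : ℂ) (hs : (m : ℝ) + 1 < s.re) :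
    ∑ k ∈ Finset.range (m + 1), (-1 : ℂ) ^ k * (Nat.choose m k : ℂ) * riemannZeta (s - k) =
      - (m.factorial * (∏ j ∈ Finset.range (m + 1), (s - (j + 1)))⁻¹ + (-1) ^ n * (auxJ m 1 s + auxJ m (-1) s)) := by
  have h1 := aux_mellin m n hm s hs
  have h2 := (aux_zeta m n hm s hs).mul_left (-Complex.Gamma s)
  have h3 := h1.unique (aux_hasSum_congr h2 fun w => by ring)
  have hs0 : 0 < s.re := by have : (0:ℝ) ≤ m := by positivity
                            linarith
  have hG : Complex.Gamma s ≠ 0 := Complex.Gamma_ne_zero_of_re_pos hs0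
  have h4 := aux_Gamma_prod (m + 1) s (by push_cast; exact hs)
  push_cast at h4
  have hP : (∏ j ∈ Finset.range (m + 1), (s - (j + 1))) ≠ 0 := by
    intro h; rw [h, mul_zero] at h4; exact hG h4
  have h5 : Complex.Gamma (s - (m + 1)) = Complex.Gamma s * (∏ j ∈ Finset.range (m + 1), (s - (j + 1)))⁻¹ := by
    rw [h4]; field_simp
  rw [h5] at h3
  refine mul_left_cancel₀ hG ?_
  linear_combination h3

lemma aux_log_bound (c : ℝ) (hc : |c| = 1) (x : ℝ) (hx : 0 < x) :
    ‖Complex.log (1 + Complex.I * c * x)‖ ≤ Real.log (1 + x) + π := by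
  set z : ℂ := 1 + Complex.I * c * x with hz
  have hre : z.re = 1 := by simp [hz]
  have h1 : 1 ≤ ‖z‖ := by
    have := Complex.abs_re_le_norm z
    rwa [hre, abs_one] at this
  have h2 : ‖z‖ ≤ 1 + x := by
    refine (norm_add_le _ _).trans ?_
    simp [hc, abs_of_pos hx]
  have h3 := Complex.norm_le_abs_re_add_abs_im (Complex.log z)
  rw [Complex.log_re, Complex.log_im, abs_of_nonneg (Real.log_nonneg h1)] at h3
  have h4 := Complex.abs_arg_le_pi z
  have h5 := Real.log_le_log (by linarith) h2
  linarith

lemma aux_exp_bound (c : ℝ) (hc : |c| = 1) (x : ℝ) (hx : 0 < x) (N : ℕ) :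
    Real.exp (N * ‖Complex.log (1 + Complex.I * c * x)‖) ≤ Real.exp (N * π) * (1 + x) ^ N := by
  have h := aux_log_bound c hc x hx
  calc _ ≤ Real.exp (N * (Real.log (1 + x) + π)) := by gcongr
    _ = Real.exp (N * π) * (Real.exp (Real.log (1 + x))) ^ N := by
      rw [← Real.exp_nat_mul, ← Real.exp_add]; congr 1; ring
    _ = _ := by rw [Real.exp_log (by linarith)]

lemma aux_ne (c x : ℝ) : (1 + Complex.I * c * x : ℂ) ≠ 0 := by
  intro h
  have := congrArg Complex.re h
  simp at this

lemma aux_slit (c x : ℝ) : (1 + Complex.I * c * x : ℂ) ∈ Complex.slitPlane := by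
  left; simp

lemma aux_cpow_bound (z s : ℂ) (hz : z ≠ 0) : ‖z ^ (-s)‖ ≤ Real.exp (‖s‖ * ‖Complex.log z‖) := by
  rw [Complex.cpow_def_of_ne_zero hz, Complex.norm_exp, Real.exp_le_exp]
  refine (Complex.re_le_norm _).trans ?_
  rw [norm_mul, norm_neg, mul_comm]

lemma auxJ_deriv (m : ℕ) (hm : 1 ≤ m) (c : ℝ) (hc : |c| = 1) (s : ℂ) :
    Integrable (fun x : ℝ => (auxW m x : ℂ) * ((1 + Complex.I * c * x) ^ (-s) * (-Complex.log (1 + Complex.I * c * x))))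
      (volume.restrict (Set.Ioi 0)) ∧
    HasDerivAt (auxJ m c) (∫ x in Set.Ioi (0:ℝ), (auxW m x : ℂ) * ((1 + Complex.I * c * x) ^ (-s) * (-Complex.log (1 + Complex.I * c * x)))) s := by
  obtain ⟨N, hN⟩ := exists_nat_ge (‖s‖ + 2)
  have hcont : ∀ s : ℂ, Continuous (fun x : ℝ => (1 + Complex.I * c * x : ℂ) ^ (-s)) := by
    intro s
    exact Continuous.cpow (by fun_prop) continuous_const (fun x => aux_slit c x)
  have hcontl : Continuous (fun x : ℝ => Complex.log (1 + Complex.I * c * x : ℂ)) :=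
    Continuous.clog (by fun_prop) (fun x => aux_slit c x)
  have hW : Measurable (fun x => (auxW m x : ℂ)) := Complex.measurable_ofReal.comp (auxW_meas m)
  have hbi : Integrable (fun x => Real.exp (N * π) * (auxW m x * (1 + x) ^ N)) (volume.restrict (Set.Ioi 0)) :=
    (auxW_int m N hm).const_mul _
  refine hasDerivAt_integral_of_dominated_loc_of_deriv_le
    (F := fun (s : ℂ) (x : ℝ) => (auxW m x : ℂ) * (1 + Complex.I * c * x) ^ (-s))
    (F' := fun (s : ℂ) (x : ℝ) => (auxW m x : ℂ) * ((1 + Complex.I * c * x) ^ (-s) * (-Complex.log (1 + Complex.I * c * x))))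
    (bound := fun x => Real.exp (N * π) * (auxW m x * (1 + x) ^ N))
    (Metric.ball_mem_nhds s one_pos) (Eventually.of_forall fun s => ?_) ?_ ?_ ?_ hbi ?_
  · exact (hW.mul (hcont s).measurable).aestronglyMeasurable
  · refine Integrable.mono' hbi (hW.mul (hcont s).measurable).aestronglyMeasurable ?_
    filter_upwards [ae_restrict_mem measurableSet_Ioi] with x hx
    rw [norm_mul, Complex.norm_real, Real.norm_of_nonneg (auxW_nonneg m x hx), mul_left_comm]
    refine mul_le_mul_of_nonneg_left ?_ (auxW_nonneg m x hx)
    refine (aux_cpow_bound _ s (aux_ne c x)).trans (le_trans ?_ (aux_exp_bound c hc x hx N))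
    gcongr
    linarith
  · exact (hW.mul ((hcont s).mul hcontl.neg).measurable).aestronglyMeasurable
  · filter_upwards [ae_restrict_mem measurableSet_Ioi] with x hx z hz
    rw [norm_mul, Complex.norm_real, Real.norm_of_nonneg (auxW_nonneg m x hx), mul_left_comm]
    refine mul_le_mul_of_nonneg_left ?_ (auxW_nonneg m x hx)
    refine le_trans ?_ (aux_exp_bound c hc x hx N)
    rw [norm_mul, norm_neg]
    have hzn : ‖z‖ ≤ ‖s‖ + 1 := by
      have h1 := mem_ball_iff_norm.1 hz
      have h2 := norm_add_le (z - s) s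
      rw [sub_add_cancel] at h2
      linarith
    set L := ‖Complex.log (1 + Complex.I * c * x)‖ with hL
    have hL0 : 0 ≤ L := norm_nonneg _
    have h3 : L ≤ Real.exp L := by have := Real.add_one_le_exp L; linarith
    calc _ ≤ Real.exp (‖z‖ * L) * Real.exp L :=
          mul_le_mul (aux_cpow_bound _ z (aux_ne c x)) h3 hL0 (Real.exp_pos _).le
      _ = Real.exp ((‖z‖ + 1) * L) := by rw [← Real.exp_add]; congr 1; ring
      _ ≤ _ := by gcongr; linarith
  · filter_upwards with x z hz
    have h := ((hasDerivAt_id z).neg.const_cpow (c := (1 + Complex.I * c * x : ℂ)) (Or.inl (aux_ne c x)))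
    refine (h.const_mul (auxW m x : ℂ)).congr_deriv ?_
    simp

lemma aux_log_add (x : ℝ) : Complex.log (1 + Complex.I * (1 : ℝ) * x) + Complex.log (1 + Complex.I * (-1 : ℝ) * x) =
    (Real.log (1 + x ^ 2) : ℂ) := by
  have h1 : (1 + Complex.I * (-1 : ℝ) * x : ℂ) = (starRingEnd ℂ) (1 + Complex.I * (1 : ℝ) * x) := by
    simp
  have h2 : Complex.arg (1 + Complex.I * (1 : ℝ) * x) ≠ π := Complex.slitPlane_arg_ne_pi (aux_slit 1 x)
  rw [h1, Complex.log_conj _ h2, Complex.add_conj, Complex.log_re]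
  have h3 : (1 + x ^ 2) = ‖(1 + Complex.I * (1 : ℝ) * x : ℂ)‖ ^ 2 := by
    rw [← Complex.normSq_eq_norm_sq, Complex.normSq_apply]; simp; ring
  rw [h3, Real.log_pow]; push_cast; ring

lemma aux_P (N : ℕ) : (∏ j ∈ Finset.range N, ((0 : ℂ) - (j + 1))) = (-1) ^ N * N.factorial ∧
    HasDerivAt (fun s : ℂ => ∏ j ∈ Finset.range N, (s - (j + 1))) (-((-1) ^ N * N.factorial * (harmonic N : ℂ))) 0 := by
  induction N with
  | zero => simpa using hasDerivAt_const (0:ℂ) (1:ℂ)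
  | succ N ih =>
    obtain ⟨h1, h2⟩ := ih
    constructor
    · rw [Finset.prod_range_succ, h1, Nat.factorial_succ]; push_cast; ring
    · simp only [Finset.prod_range_succ]
      have h3 : HasDerivAt (fun s : ℂ => s - ((N : ℂ) + 1)) 1 0 := (hasDerivAt_id (0:ℂ)).sub_const _
      refine (h2.mul h3).congr_deriv ?_
      rw [h1, harmonic_succ, Nat.factorial_succ]
      have : (N : ℂ) + 1 ≠ 0 := by exact_mod_cast Nat.succ_ne_zero N
      push_cast
      field_simp
      ring

lemma aux_main (m n : ℕ) (hm : m + 1 = 2 * n) :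
    (-1 : ℂ) ^ n *
        ((∫ x in Set.Ioi (0 : ℝ),
            x ^ m * Real.log (1 + x ^ 2) / (Real.exp (2 * π * x) - 1) : ℝ) : ℂ) =
      (harmonic (m + 1) : ℂ) / ((m : ℂ) + 1)
        + ∑ k ∈ Finset.range (m + 1),
            (-1 : ℂ) ^ k * (Nat.choose m k : ℂ) * deriv riemannZeta (-(k : ℂ)) := by
  have hm1 : 1 ≤ m := by omega
  set f : ℂ → ℂ := fun s => ∑ k ∈ Finset.range (m + 1), (-1 : ℂ) ^ k * (Nat.choose m k : ℂ) * riemannZeta (s - k) with hf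
  set g : ℂ → ℂ := fun s => - (m.factorial * (∏ j ∈ Finset.range (m + 1), (s - (j + 1)))⁻¹ + (-1) ^ n * (auxJ m 1 s + auxJ m (-1) s)) with hg
  set T : Finset ℂ := (Finset.range (m + 1)).image (fun j : ℕ => (j : ℂ) + 1) with hT
  set U : Set ℂ := (T : Set ℂ)ᶜ with hU
  have hUo : IsOpen U := T.finite_toSet.isClosed.isOpen_compl
  have hUc : IsPreconnected U := by
    refine (Set.Countable.isPathConnected_compl_of_one_lt_rank ?_ T.countable_toSet).isConnected.isPreconnected
    rw [Complex.rank_real_complex]; exact Cardinal.one_lt_two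
  have hUne : ∀ s ∈ U, ∀ j ∈ Finset.range (m + 1), s ≠ (j : ℂ) + 1 := by
    intro s hs j hj h
    exact hs (by rw [h]; exact Finset.mem_coe.2 (Finset.mem_image_of_mem _ hj))
  have hfd : AnalyticOnNhd ℂ f U := by
    refine DifferentiableOn.analyticOnNhd (fun s hs => DifferentiableAt.differentiableWithinAt ?_) hUo
    refine DifferentiableAt.fun_sum fun k hk => ?_
    refine DifferentiableAt.const_mul ?_ _
    refine DifferentiableAt.comp (g := riemannZeta) (f := fun s : ℂ => s - k) s (differentiableAt_riemannZeta ?_) (by fun_prop)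
    intro h
    exact hUne s hs k hk (by linear_combination h)
  have hJ1 := fun s => (auxJ_deriv m hm1 1 (by simp) s).2
  have hJ2 := fun s => (auxJ_deriv m hm1 (-1) (by simp) s).2
  have hgd : AnalyticOnNhd ℂ g U := by
    refine DifferentiableOn.analyticOnNhd (fun s hs => DifferentiableAt.differentiableWithinAt ?_) hUo
    refine DifferentiableAt.fun_neg (DifferentiableAt.fun_add ?_ ?_)
    · refine DifferentiableAt.const_mul (DifferentiableAt.fun_inv (by fun_prop) ?_) _
      rw [Finset.prod_ne_zero_iff]
      intro j hj
      exact sub_ne_zero.2 (hUne s hs j hj)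
    · exact DifferentiableAt.const_mul ((hJ1 s).differentiableAt.fun_add (hJ2 s).differentiableAt) _
  have hopen : IsOpen {s : ℂ | (m : ℝ) + 1 < s.re} := isOpen_lt continuous_const Complex.continuous_re
  have hz0 : (((m : ℝ) + 2 : ℝ) : ℂ) ∈ {s : ℂ | (m : ℝ) + 1 < s.re} := by
    simp only [Set.mem_ofPred_eq, Complex.ofReal_re]; linarith
  have hz0U : (((m : ℝ) + 2 : ℝ) : ℂ) ∈ U := by
    intro h
    obtain ⟨j, hj, h2⟩ := Finset.mem_image.1 (Finset.mem_coe.1 h)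
    have h3 : j + 1 = m + 2 := by
      have : ((j + 1 : ℕ) : ℂ) = ((m + 2 : ℕ) : ℂ) := by push_cast; push_cast at h2; exact h2
      exact_mod_cast this
    have := Finset.mem_range.1 hj
    omega
  have hEq : Set.EqOn f g U := by
    refine hfd.eqOn_of_preconnected_of_eventuallyEq hgd hUc hz0U ?_
    filter_upwards [hopen.mem_nhds hz0] with s hs
    exact aux_D m n hm s hs
  have h0U : (0 : ℂ) ∈ U := by
    intro h
    obtain ⟨j, hj, h2⟩ := Finset.mem_image.1 (Finset.mem_coe.1 h)
    exact Nat.cast_add_one_ne_zero j h2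
  have hev : f =ᶠ[nhds 0] g := by
    filter_upwards [hUo.mem_nhds h0U] with s hs using hEq hs
  have hf' : HasDerivAt f (∑ k ∈ Finset.range (m + 1), (-1 : ℂ) ^ k * (Nat.choose m k : ℂ) * deriv riemannZeta (-(k : ℂ))) 0 := by
    refine HasDerivAt.fun_sum fun k hk => ?_
    refine HasDerivAt.const_mul _ ?_
    have h1 : HasDerivAt riemannZeta (deriv riemannZeta (-(k : ℂ))) ((0 : ℂ) - k) := by
      rw [zero_sub]
      refine (differentiableAt_riemannZeta ?_).hasDerivAt
      intro h
      exact hUne 0 h0U k hk (by linear_combination h)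
    exact h1.comp_sub_const 0 (k : ℂ)
  obtain ⟨p1, p2⟩ := aux_P (m + 1)
  have hsgn : (-1 : ℂ) ^ (m + 1) = 1 := by rw [hm, pow_mul]; simp
  rw [hsgn, one_mul] at p1
  rw [hsgn, one_mul] at p2
  have hfac : ((m + 1).factorial : ℂ) ≠ 0 := by exact_mod_cast Nat.factorial_ne_zero _
  have p3 := p2.fun_inv (by rw [p1]; exact hfac)
  have hg' := ((p3.const_mul (m.factorial : ℂ)).fun_add (((hJ1 0).fun_add (hJ2 0)).const_mul ((-1 : ℂ) ^ n))).fun_neg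
  have huniq := hf'.unique (hg'.congr_of_eventuallyEq hev)
  have hI : (∫ x in Set.Ioi (0:ℝ), (auxW m x : ℂ) * ((1 + Complex.I * (1 : ℝ) * x) ^ (-(0:ℂ)) * (-Complex.log (1 + Complex.I * (1 : ℝ) * x)))) +
     (∫ x in Set.Ioi (0:ℝ), (auxW m x : ℂ) * ((1 + Complex.I * (-1 : ℝ) * x) ^ (-(0:ℂ)) * (-Complex.log (1 + Complex.I * (-1 : ℝ) * x)))) =
     - ((∫ x in Set.Ioi (0 : ℝ),
            x ^ m * Real.log (1 + x ^ 2) / (Real.exp (2 * π * x) - 1) : ℝ) : ℂ) := by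
    rw [← integral_add (auxJ_deriv m hm1 1 (by simp) 0).1 (auxJ_deriv m hm1 (-1) (by simp) 0).1,
      ← integral_complex_ofReal, ← integral_neg]
    refine integral_congr_ae (Eventually.of_forall fun x => ?_)
    have hl := aux_log_add x
    simp only [neg_zero, Complex.cpow_zero, one_mul]
    calc _ = -((auxW m x : ℂ) * (Real.log (1 + x ^ 2) : ℂ)) := by rw [← hl]; ring
      _ = _ := by rw [auxW]; push_cast; ring
  rw [hI, p1] at huniq
  rw [huniq, Nat.factorial_succ]
  have h1 : (m : ℂ) + 1 ≠ 0 := Nat.cast_add_one_ne_zero m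
  have h2 : (m.factorial : ℂ) ≠ 0 := by exact_mod_cast Nat.factorial_ne_zero _
  generalize (∫ x in Set.Ioi (0 : ℝ), x ^ m * Real.log (1 + x ^ 2) / (Real.exp (2 * π * x) - 1)) = A
  push_cast
  field_simp
  ring

/-- (−1)ⁿ ∫₀^∞ x^{2n−1} log(1+x²)/(e^{2πx}−1) dx
    = H_{2n}/(2n) + ∑_{k=0}^{2n−1} (−1)^k C(2n−1,k) ζ'(−k). -/
theorem integral_pow_log_eq (n : ℕ) (hn : 1 ≤ n) :
    (-1 : ℂ) ^ n *
        ((∫ x in Set.Ioi (0 : ℝ),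
            x ^ (2 * n - 1) * Real.log (1 + x ^ 2) / (Real.exp (2 * π * x) - 1) : ℝ) : ℂ) =
      (harmonic (2 * n) : ℂ) / (2 * (n : ℂ))
        + ∑ k ∈ Finset.range (2 * n),
            (-1 : ℂ) ^ k * (Nat.choose (2 * n - 1) k : ℂ) * deriv riemannZeta (-(k : ℂ)) := by
  have h := aux_main (2 * n - 1) n (by omega)
  have h2 : 2 * n - 1 + 1 = 2 * n := by omega
  have h3 : ((2 * n - 1 : ℕ) : ℂ) + 1 = 2 * (n : ℂ) := by exact_mod_cast h2
  rw [h2, h3] at h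
  exact h
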